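/- For every finite multigraph G and every partition σ of its vertex set, 𝔣(G^σ) ≤ 𝔣(G), where G^σ is the quotient multigraph obtained by identifying the vertices lying in a common block of σ (keeping all edges). -/

import Mathlib

open MeasureTheory ProbabilityTheory Filter Matrix Asymptotics
open scoped BigOperators ENNReal
open scoped Classical

noncomputable section

/-- The diagonal projection `Δ` on `N × N` complex matrices. -/
def dproj {N : ℕ} (A : Matrix (Fin N) (Fin N) ℂ) : Matrix (Fin N) (Fin N) ℂ :=
  Matrix.of fun i j => if i = j then A i j else 0

/-- The operator norm of a matrix acting on `ℓ²({1,…,N})`. -/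
def matOpNorm {N : ℕ} (A : Matrix (Fin N) (Fin N) ℂ) : ℝ :=
  ‖Matrix.toEuclideanCLM (𝕜 := ℂ) A‖

/-! ### Multigraph combinatorics -/

section Graph

variable {V E : Type} (src tgt : E → V)

/-- Adjacency through an edge avoiding a forbidden set `F` of edges
(direction is ignored). -/
def adjOn (F : Set E) (a b : V) : Prop :=
  ∃ e, e ∉ F ∧ ((src e = a ∧ tgt e = b) ∨ (src e = b ∧ tgt e = a))

/-- Reachability in the graph, using only edges outside `F`. -/
def reachOn (F : Set E) : V → V → Prop :=
  Relation.ReflTransGen (adjOn src tgt F)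

lemma adjOn_symm (F : Set E) : Symmetric (adjOn src tgt F) := by
  rintro a b ⟨e, he, h⟩
  exact ⟨e, he, h.symm⟩

/-- The setoid of connectivity using edges outside `F`. -/
def connSetoid (F : Set E) : Setoid V :=
  ⟨reachOn src tgt F,
    ⟨fun _ => Relation.ReflTransGen.refl,
     fun h =>
       haveI : Std.Symm (adjOn src tgt F) := ⟨fun _ _ hab => adjOn_symm src tgt F hab⟩
       Relation.ReflTransGen.symmetric.symm _ _ h,
     fun h h' => Relation.ReflTransGen.trans h h'⟩⟩

/-- Number of connected components of the graph with the edges in `F` deleted. -/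
def ncompAvoiding (F : Set E) : ℕ :=
  Nat.card (Quotient (connSetoid src tgt F))

/-- Number of connected components. -/
def ncomp : ℕ := ncompAvoiding src tgt ∅

/-- The graph is connected. -/
def IsConnectedGraph : Prop := ∀ a b : V, reachOn src tgt ∅ a b

/-- A cut edge (bridge): deleting it disconnects its endpoints. -/
def IsCutEdge (e : E) : Prop := ¬ reachOn src tgt {e} (src e) (tgt e)

/-- The set of cut edges. -/
def cutEdges : Set E := {e | IsCutEdge src tgt e}

/-- The setoid whose classes are the two-edge connected components
(connected components after deleting all cut edges). -/
def teccSetoid : Setoid V := connSetoid src tgt (cutEdges src tgt)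

/-- Degree, in the forest of two-edge connected components, of a
two-edge connected component: the number of cut edges incident to it. -/
def teccDeg (c : Quotient (teccSetoid src tgt)) : ℕ :=
  Nat.card {e : E // IsCutEdge src tgt e ∧
    (Quotient.mk (teccSetoid src tgt) (src e) = c ∨
      Quotient.mk (teccSetoid src tgt) (tgt e) = c)}

/-- `𝔣(G)`: the number of leaves of the forest of two-edge connected components,
single-vertex trees of the forest counting twice. -/
def frak : ℕ :=
  Nat.card {c : Quotient (teccSetoid src tgt) // teccDeg src tgt c = 1} +
    2 * Nat.card {c : Quotient (teccSetoid src tgt) // teccDeg src tgt c = 0}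

end Graph

/-! ### Graph monomials -/

/-- A graph monomial: a finite directed multigraph with two roots and edges
labelled by a family index in `Fin L` and an index in `K`.  (Connectedness is
required separately via `IsConnectedGraph`.) -/
structure GraphMonomial (L : ℕ) (K : Type) where
  V : Type
  E : Type
  fintV : Fintype V
  fintE : Fintype E
  src : E → V
  tgt : E → V
  vin : V
  vout : V
  labL : E → Fin L
  labK : E → K

attribute [instance] GraphMonomial.fintV GraphMonomial.fintE

namespace GraphMonomial

variable {L : ℕ} {K : Type} (g : GraphMonomial L K)

/-- Evaluation of a graph monomial in a collection of matrices. -/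
def eval {N : ℕ} (A : Fin L → K → Matrix (Fin N) (Fin N) ℂ) :
    Matrix (Fin N) (Fin N) ℂ :=
  Matrix.of fun i j => ∑ φ : g.V → Fin N,
    if φ g.vin = j ∧ φ g.vout = i then
      ∏ e : g.E, A (g.labL e) (g.labK e) (φ (g.tgt e)) (φ (g.src e))
    else 0

/-- The starting vertex of a step `(e, b)`: `e` traversed forward if `b = true`,
backward otherwise. -/
def stepSrc (s : g.E × Bool) : g.V := if s.2 then g.src s.1 else g.tgt s.1

/-- The ending vertex of a step. -/
def stepTgt (s : g.E × Bool) : g.V := if s.2 then g.tgt s.1 else g.src s.1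

/-- A simple cycle of the underlying undirected multigraph: a nonempty cyclic
sequence of steps with pairwise distinct edges and pairwise distinct vertices. -/
def IsSimpleCycle (c : List (g.E × Bool)) : Prop :=
  ∃ h : c ≠ [],
    (∀ i : Fin c.length,
      g.stepTgt (c.get i) =
        g.stepSrc (c.get ⟨((i : ℕ) + 1) % c.length,
          Nat.mod_lt _ (List.length_pos_iff.mpr h)⟩)) ∧
    (c.map Prod.fst).Nodup ∧ (c.map g.stepSrc).Nodup

/-- A cycle is directed when it traverses all its edges consistently with
their orientations (one way or the other). -/
def IsDirectedCycleList (c : List (g.E × Bool)) : Prop :=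
  (∀ s ∈ c, s.2 = true) ∨ (∀ s ∈ c, s.2 = false)

/-- `S` is the edge set of some simple cycle. -/
def IsCycleEdgeSet (S : Finset g.E) : Prop :=
  ∃ c, g.IsSimpleCycle c ∧ (c.map Prod.fst).toFinset = S

/-- The underlying graph is an oriented cactus: it is connected, every simple
cycle is directed, and every edge belongs to exactly one simple cycle. -/
def IsOrientedCactus : Prop :=
  IsConnectedGraph g.src g.tgt ∧
  (∀ c, g.IsSimpleCycle c → g.IsDirectedCycleList c) ∧
  (∀ e : g.E, ∃! S : Finset g.E, g.IsCycleEdgeSet S ∧ e ∈ S)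

/-- A cactus-type monomial: an oriented cactus whose input and output coincide. -/
def IsCactusType : Prop := g.vin = g.vout ∧ g.IsOrientedCactus

/-- A member of `ℱ`: a directed simple path (oriented from the input, at the far
right, to the output, at the far left) with oriented cacti attached to the
vertices of the path (the root of each cactus being a path vertex). -/
def IsPathCactusType : Prop :=
  IsConnectedGraph g.src g.tgt ∧
  ∃ (d : ℕ) (v : Fin (d + 1) → g.V) (f : Fin d → g.E),
    Function.Injective v ∧ Function.Injective f ∧
    (∀ j : Fin d, g.src (f j) = v j.succ ∧ g.tgt (f j) = v j.castSucc) ∧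
    g.vin = v (Fin.last d) ∧ g.vout = v 0 ∧
    (∀ c, g.IsSimpleCycle c → g.IsDirectedCycleList c ∧ ∀ s ∈ c, s.1 ∉ Set.range f) ∧
    (∀ e : g.E, e ∉ Set.range f →
      ∃! S : Finset g.E, g.IsCycleEdgeSet S ∧ e ∈ S) ∧
    (∀ w : g.V, ∃! j : Fin (d + 1), reachOn g.src g.tgt (Set.range f) w (v j))

end GraphMonomial

/-!
Since degree `0` counts twice and degree `1` once, `𝔣(G)` is the sum of the truncated differences
`2 - deg c` over the two-edge connected components `c`. The components of `G` merged into one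
component `d` of `G^σ` form a nonempty set `S`. Because the cut edges form a forest, fewer than `#S`
of them lie inside `S`, so by the handshake identity `∑ c ∈ S, (2 - deg c)` is at least `2` minus
the number of cut edges leaving `S`; these are exactly the cut edges of `G^σ` at `d`.
-/

section Incidence

variable {C E : Type*}

/-- The constant function and the indicators of the sides, normalized to vanish at `c₀`, are dual to
evaluation at `c₀` and the differences of the evaluations at `s e` and `t e`. -/
lemma linearIndependent_indicator_separating_sides (s t : E → C) (side : E → Set C)
    (hs : ∀ e, s e ∈ side e) (ht : ∀ e, t e ∉ side e)
    (hside : ∀ e e', e ≠ e' → (s e' ∈ side e ↔ t e' ∈ side e)) (c₀ : C) :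
    LinearIndependent ℚ fun o : Option E => o.elim (1 : C → ℚ) fun e c =>
      (side e).indicator 1 c - (side e).indicator 1 c₀ := by
  let ev (c : C) : Module.Dual ℚ (C → ℚ) := LinearMap.proj c
  refine LinearIndependent.of_pairwise_dual_eq_zero_one _
    (fun o => o.elim (ev c₀) fun e => ev (s e) - ev (t e)) ?_ ?_
  · rintro (_ | e) (_ | e') hne
    · exact absurd rfl hne
    · simp [ev]
    · simp [ev]
    · have h := hside e' e fun h => hne (congrArg some h.symm)
      simp [ev, Set.indicator_apply, h]
  · rintro (_ | e)
    · simp [ev]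
    · simp [ev, hs e, ht e]

lemma finite_and_natCard_lt_of_separating_sides [Finite C] [Nonempty C] (s t : E → C)
    (side : E → Set C) (hs : ∀ e, s e ∈ side e) (ht : ∀ e, t e ∉ side e)
    (hside : ∀ e e', e ≠ e' → (s e' ∈ side e ↔ t e' ∈ side e)) :
    Finite E ∧ Nat.card E < Nat.card C := by
  have := Fintype.ofFinite C
  have hli :=
    linearIndependent_indicator_separating_sides s t side hs ht hside (Classical.arbitrary C)
  have : Finite (Option E) := hli.finite
  have : Finite E := Finite.of_injective some (Option.some_injective E)
  have := Fintype.ofFinite E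
  refine ⟨inferInstance, ?_⟩
  simpa [Nat.add_one_le_iff] using hli.fintype_card_le_finrank

lemma sum_ncard_incident {K : Set E} (hK : K.Finite) {s t : E → C} (hst : ∀ e ∈ K, s e ≠ t e)
    (S : Finset C) :
    ∑ c ∈ S, {e ∈ K | s e = c ∨ t e = c}.ncard =
      2 * {e ∈ K | s e ∈ S ∧ t e ∈ S}.ncard + {e ∈ K | Xor (s e ∈ S) (t e ∈ S)}.ncard := by
  lift K to Finset E using hK
  simp only [Finset.mem_coe, ← Finset.coe_filter, Set.ncard_coe_finset, Finset.card_filter]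
  rw [Finset.sum_comm, Finset.mul_sum, ← Finset.sum_add_distrib]
  refine Finset.sum_congr rfl fun e he => ?_
  have hsplit (c : C) : (if s e = c ∨ t e = c then 1 else 0) =
      (if s e = c then 1 else 0) + if t e = c then 1 else 0 := by
    grind [hst e he]
  simp only [hsplit, Finset.sum_add_distrib, Finset.sum_ite_eq]
  grind

end Incidence

section Reachability

variable {V V' E : Type} {src tgt : E → V} {F F' : Set E} {a b : V}

lemma reachOn.symm (h : reachOn src tgt F a b) : reachOn src tgt F b a :=
  (connSetoid src tgt F).symm' h

lemma reachOn.mono (hF : F' ⊆ F) (h : reachOn src tgt F a b) : reachOn src tgt F' a b :=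
  Relation.ReflTransGen.mono (fun _ _ ⟨e, he, hab⟩ => ⟨e, fun he' => he (hF he'), hab⟩) _ _ h

lemma reachOn.map (p : V → V') (h : reachOn src tgt F a b) :
    reachOn (p ∘ src) (p ∘ tgt) F (p a) (p b) :=
  Relation.ReflTransGen.lift p (fun _ _ ⟨e, he, hab⟩ =>
    ⟨e, he, hab.imp (And.imp (congrArg p) (congrArg p)) (And.imp (congrArg p) (congrArg p))⟩) _ _ h

lemma reachOn_src_tgt {e : E} (he : e ∉ F) : reachOn src tgt F (src e) (tgt e) :=
  Relation.ReflTransGen.single ⟨e, he, Or.inl ⟨rfl, rfl⟩⟩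

lemma reachOn_src_iff_tgt {e : E} (he : e ∉ F) :
    reachOn src tgt F a (src e) ↔ reachOn src tgt F a (tgt e) :=
  ⟨fun h => h.trans (reachOn_src_tgt he), fun h => h.trans (reachOn_src_tgt he).symm⟩

lemma IsCutEdge.of_comp {p : V → V'} {e : E} (h : IsCutEdge (p ∘ src) (p ∘ tgt) e) :
    IsCutEdge src tgt e :=
  fun hreach => h (hreach.map p)

end Reachability

section TwoEdgeConnectedComponents

variable {V V' E : Type} (src tgt : E → V)

/-- The two-edge connected components of a multigraph, i.e. the vertices of `F(G)`. -/
abbrev Tecc : Type := Quotient (teccSetoid src tgt)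

/-- The two-edge connected component of a vertex. -/
abbrev tecc (v : V) : Tecc src tgt := Quotient.mk (teccSetoid src tgt) v

/-- The components containing a vertex that the source of `e` reaches in `G - e`. For a cut edge `e`
this is one of the two parts into which `e` separates its tree in `F(G)`. -/
def cutSide (e : E) : Set (Tecc src tgt) :=
  {c | ∃ v, reachOn src tgt {e} (src e) v ∧ tecc src tgt v = c}

/-- The cut edges both of whose ends lie in `S`. -/
def innerCutEdges (S : Finset (Tecc src tgt)) : Set E :=
  {e ∈ cutEdges src tgt | tecc src tgt (src e) ∈ S ∧ tecc src tgt (tgt e) ∈ S}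

/-- The cut edges with exactly one end in `S`. -/
def boundaryCutEdges (S : Finset (Tecc src tgt)) : Set E :=
  {e ∈ cutEdges src tgt | Xor (tecc src tgt (src e) ∈ S) (tecc src tgt (tgt e) ∈ S)}

variable {src tgt}

lemma IsCutEdge.reachOn_of_tecc_eq {e : E} (he : IsCutEdge src tgt e) {a b : V}
    (h : tecc src tgt a = tecc src tgt b) : reachOn src tgt {e} a b :=
  reachOn.mono (Set.singleton_subset_iff.mpr he) (Quotient.exact h)

lemma isCutEdge_iff_tecc_ne {e : E} :
    IsCutEdge src tgt e ↔ tecc src tgt (src e) ≠ tecc src tgt (tgt e) := by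
  refine ⟨fun he h => he (he.reachOn_of_tecc_eq h), fun h => ?_⟩
  by_contra he
  exact h (Quotient.sound (reachOn_src_tgt (F := cutEdges src tgt) he))

lemma IsCutEdge.tecc_mem_cutSide {e : E} (he : IsCutEdge src tgt e) {v : V} :
    tecc src tgt v ∈ cutSide src tgt e ↔ reachOn src tgt {e} (src e) v := by
  refine ⟨?_, fun h => ⟨v, h, rfl⟩⟩
  rintro ⟨w, hw, hwv⟩
  exact hw.trans (he.reachOn_of_tecc_eq hwv)

lemma finite_innerCutEdges_and_ncard_lt {S : Finset (Tecc src tgt)} (hS : S.Nonempty) :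
    (innerCutEdges src tgt S).Finite ∧ (innerCutEdges src tgt S).ncard < S.card := by
  have : Nonempty S := hS.to_subtype
  have h := finite_and_natCard_lt_of_separating_sides (E := innerCutEdges src tgt S) (C := S)
    (fun e => ⟨tecc src tgt (src e), e.2.2.1⟩) (fun e => ⟨tecc src tgt (tgt e), e.2.2.2⟩)
    (fun e => {c | c.1 ∈ cutSide src tgt e})
    (fun ⟨_, he, _⟩ => he.tecc_mem_cutSide.mpr .refl)
    (fun ⟨_, he, _⟩ => mt he.tecc_mem_cutSide.mp he)
    (fun ⟨_, he, _⟩ e' hne => by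
      simp only [Set.mem_ofPred_eq, he.tecc_mem_cutSide]
      exact reachOn_src_iff_tgt fun h => hne (Subtype.ext h.symm))
  simpa [Set.finite_coe_iff] using h

lemma finite_cutEdges [Finite (Tecc src tgt)] : (cutEdges src tgt).Finite := by
  have := Fintype.ofFinite (Tecc src tgt)
  rcases (cutEdges src tgt).eq_empty_or_nonempty with h | ⟨e, -⟩
  · exact h ▸ Set.finite_empty
  · have huniv : (Finset.univ : Finset (Tecc src tgt)).Nonempty := ⟨tecc src tgt (src e), by simp⟩
    simpa [innerCutEdges] using (finite_innerCutEdges_and_ncard_lt huniv).1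

lemma sum_teccDeg [Finite (Tecc src tgt)] (S : Finset (Tecc src tgt)) :
    ∑ c ∈ S, teccDeg src tgt c =
      2 * (innerCutEdges src tgt S).ncard + (boundaryCutEdges src tgt S).ncard :=
  sum_ncard_incident finite_cutEdges (fun _ he => isCutEdge_iff_tecc_ne.mp he) S

lemma two_sub_ncard_boundaryCutEdges_le [Finite (Tecc src tgt)] {S : Finset (Tecc src tgt)}
    (hS : S.Nonempty) :
    2 - (boundaryCutEdges src tgt S).ncard ≤ ∑ c ∈ S, (2 - teccDeg src tgt c) := by
  have hforest := (finite_innerCutEdges_and_ncard_lt hS).2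
  have hhandshake := sum_teccDeg S
  have htrunc : S.card * 2 ≤ ∑ c ∈ S, (2 - teccDeg src tgt c) + ∑ c ∈ S, teccDeg src tgt c := by
    rw [← Finset.sum_add_distrib, ← smul_eq_mul]
    exact Finset.card_nsmul_le_sum _ _ _ fun c _ => by omega
  omega

lemma frak_eq_sum [Fintype (Tecc src tgt)] :
    frak src tgt = ∑ c : Tecc src tgt, (2 - teccDeg src tgt c) := by
  simp only [frak, Nat.card_eq_fintype_card, Fintype.card_subtype, Finset.card_filter,
    Finset.mul_sum, ← Finset.sum_add_distrib]
  refine Finset.sum_congr rfl fun c _ => ?_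
  split_ifs <;> omega

variable (src tgt)

/-- The map induced on two-edge connected components by a map of vertices. -/
def teccMap (p : V → V') : Tecc src tgt → Tecc (p ∘ src) (p ∘ tgt) :=
  Quotient.map p fun _ _ h => (reachOn.map p h).mono fun _ => IsCutEdge.of_comp

variable {src tgt} {p : V → V'}

lemma teccMap_surjective (hp : p.Surjective) : (teccMap src tgt p).Surjective :=
  Quotient.map_surjective _ hp

lemma teccDeg_comp [Fintype (Tecc src tgt)] (d : Tecc (p ∘ src) (p ∘ tgt)) :
    teccDeg (p ∘ src) (p ∘ tgt) d =
      (boundaryCutEdges src tgt {c | teccMap src tgt p c = d}).ncard := by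
  change Set.ncard {e | _} = _
  congr 1
  ext e
  have hcut := isCutEdge_iff_tecc_ne (src := p ∘ src) (tgt := p ∘ tgt) (e := e)
  have hof := IsCutEdge.of_comp (src := src) (tgt := tgt) (p := p) (e := e)
  have hmap (v : V) : teccMap src tgt p (tecc src tgt v) = tecc (p ∘ src) (p ∘ tgt) (p v) := rfl
  simp only [boundaryCutEdges, cutEdges, Set.mem_ofPred_eq, Finset.mem_filter_univ, hmap]
  grind

end TwoEdgeConnectedComponents

theorem frak_quotient_le_general {V V' E : Type} {src tgt : E → V} [Finite (Tecc src tgt)]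
    {p : V → V'} (hp : p.Surjective) : frak (p ∘ src) (p ∘ tgt) ≤ frak src tgt := by
  have hsurj := teccMap_surjective (src := src) (tgt := tgt) hp
  have := Fintype.ofFinite (Tecc src tgt)
  have := Fintype.ofSurjective _ hsurj
  have hfiber (d : Tecc (p ∘ src) (p ∘ tgt)) :
      ({c | teccMap src tgt p c = d} : Finset (Tecc src tgt)).Nonempty :=
    (hsurj d).imp fun c hc => by simpa using hc
  calc frak (p ∘ src) (p ∘ tgt)
      = ∑ d, (2 - teccDeg (p ∘ src) (p ∘ tgt) d) := frak_eq_sum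
    _ = ∑ d, (2 - (boundaryCutEdges src tgt {c | teccMap src tgt p c = d}).ncard) := by
        simp only [teccDeg_comp]
    _ ≤ ∑ d, ∑ c with teccMap src tgt p c = d, (2 - teccDeg src tgt c) :=
        Finset.sum_le_sum fun d _ => two_sub_ncard_boundaryCutEdges_le (hfiber d)
    _ = ∑ c, (2 - teccDeg src tgt c) := Finset.sum_fiberwise _ _ _
    _ = frak src tgt := frak_eq_sum.symm

/-- For every finite multigraph `G` and every partition `σ` of its vertex set,
`𝔣(G^σ) ≤ 𝔣(G)`, where `G^σ` is the quotient multigraph. -/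
theorem frak_quotient_le
    {V E : Type} [Fintype V] [Fintype E] (src tgt : E → V) (σ : Setoid V) :
    frak (fun e => Quotient.mk σ (src e)) (fun e => Quotient.mk σ (tgt e)) ≤
      frak src tgt :=
  frak_quotient_le_general Quotient.mk_surjective
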